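/- For every n-qudit state ρ, every α ∈ [1,∞) (where D_1 = D is the relative entropy), and every MSPS σ with σ ≠ M(ρ): D_α(ρ‖σ) > D_α(ρ‖M(ρ)); that is, the mean state is the unique minimizer of the sandwiched Rényi relative entropy from ρ among all MSPS. -/

import Mathlib

open scoped BigOperators ComplexOrder Classical ENNReal
open Matrix

namespace PaperQI

/-- The computational-basis index set `ℤ_d^n` for an `n`-qudit system. -/
abbrev QV (d n : ℕ) := Fin n → ZMod d

/-- Matrices (linear operators) on the `n`-qudit Hilbert space `(ℂ^d)^{⊗ n}`,
written in the computational basis indexed by `ℤ_d^n`. -/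
abbrev Mat (d n : ℕ) := Matrix (QV d n) (QV d n) ℂ

/-- The character `ξ^z = exp(2πi z/d)` for `z ∈ ℤ_d`. -/
noncomputable def ch (d : ℕ) (z : ZMod d) : ℂ :=
  Complex.exp (2 * Real.pi * Complex.I * (z.val : ℂ) / (d : ℂ))

/-- Dot product on `ℤ_d^n`. -/
def qdot {d n : ℕ} (p k : QV d n) : ZMod d := ∑ i, p i * k i

/-- The `n`-qudit Weyl operator `w(p,q) = ⊗_i ξ^{-2⁻¹ p_i q_i} Z^{p_i} X^{q_i}`
(for odd prime `d`).  Its matrix entries are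
`w(p,q)[k+q, k] = ξ^{p·k + 2⁻¹ p·q}`. -/
noncomputable def weyl (d n : ℕ) [Fact (Nat.Prime d)] (p q : QV d n) : Mat d n :=
  Matrix.of fun k' k =>
    if k' = k + q then ch d (qdot p k + (2 : ZMod d)⁻¹ * qdot p q) else 0

/-- `ρ` is an `n`-qudit state: positive semidefinite with trace one. -/
def IsState (d n : ℕ) [Fact (Nat.Prime d)] (ρ : Mat d n) : Prop :=
  ρ.PosSemidef ∧ ρ.trace = 1

/-- The characteristic function `Ξ_ρ(p,q) = Tr[ρ w(-p,-q)]`. -/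
noncomputable def xi (d n : ℕ) [Fact (Nat.Prime d)] (ρ : Mat d n)
    (pq : QV d n × QV d n) : ℂ :=
  (ρ * weyl d n (-pq.1) (-pq.2)).trace

/-- The mean state `M(ρ) = d^{-n} ∑_{|Ξ_ρ(p,q)| = 1} Ξ_ρ(p,q) w(p,q)`. -/
noncomputable def meanState (d n : ℕ) [Fact (Nat.Prime d)] (ρ : Mat d n) : Mat d n :=
  ((d : ℂ) ^ n)⁻¹ •
    ∑ pq : QV d n × QV d n,
      if ‖xi d n ρ pq‖ = 1 then xi d n ρ pq • weyl d n pq.1 pq.2 else 0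

/-- `ρ` is a minimal stabilizer-projection state (MSPS): for some `r ≤ n` there are
mutually commuting Weyl operators `w(p_i,q_i)`, `i = 1,…,r`, whose labels generate a
subgroup of `V^n` of order `d^r`, and phases `x ∈ ℤ_d^r`, such that
`ρ = d^{-(n-r)} ∏_i ( (1/d) ∑_{k ∈ ℤ_d} (ξ^{x_i} w(p_i,q_i))^k )`. -/
noncomputable def IsMSPS (d n : ℕ) [Fact (Nat.Prime d)] (ρ : Mat d n) : Prop :=
  ∃ r : ℕ, r ≤ n ∧
    ∃ (p q : Fin r → QV d n) (x : Fin r → ZMod d),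
      (∀ i j, Commute (weyl d n (p i) (q i)) (weyl d n (p j) (q j))) ∧
      Nat.card (AddSubgroup.closure (Set.range fun i => (p i, q i)) :
        AddSubgroup (QV d n × QV d n)) = d ^ r ∧
      ρ = ((d : ℂ) ^ (n - r))⁻¹ •
        (List.ofFn fun i =>
          (d : ℂ)⁻¹ • ∑ k : ZMod d, (ch d (x i) • weyl d n (p i) (q i)) ^ k.val).prod

/-- The magic gap `MG(ρ) = 1 - max{|Ξ_ρ(p,q)| : Ξ_ρ(p,q) ≠ 0, |Ξ_ρ(p,q)| ≠ 1}`,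
and `MG(ρ) = 0` if this set is empty. -/
noncomputable def magicGap (d n : ℕ) [Fact (Nat.Prime d)] (ρ : Mat d n) : ℝ :=
  let s : Finset ℝ :=
    (Finset.univ.filter fun pq : QV d n × QV d n =>
      xi d n ρ pq ≠ 0 ∧ ‖xi d n ρ pq‖ ≠ 1).image
      fun pq => ‖xi d n ρ pq‖
  if h : s.Nonempty then 1 - s.max' h else 0

/-- Von Neumann entropy `H(ρ) = -∑ λ_i log λ_i` (natural log, eigenvalues of `ρ`),
with the convention `0 log 0 = 0`; junk value `0` on non-Hermitian matrices. -/
noncomputable def vnEnt {d n : ℕ} [Fact (Nat.Prime d)] (ρ : Mat d n) : ℝ :=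
  if h : ρ.IsHermitian then -∑ i, h.eigenvalues i * Real.log (h.eigenvalues i) else 0

/-- Rényi entropy `H_α` for `α ∈ [0,∞]`:  `H_0 = log rank`, `H_1 = H` (von Neumann),
`H_∞ = -log λ_max`, and `H_α = (1-α)⁻¹ log ∑ λ_i^α` otherwise. -/
noncomputable def renyiEnt {d n : ℕ} [Fact (Nat.Prime d)] (α : ℝ≥0∞) (ρ : Mat d n) : ℝ :=
  if h : ρ.IsHermitian then
    if α = 0 then Real.log (ρ.rank : ℝ)
    else if α = 1 then -∑ i, h.eigenvalues i * Real.log (h.eigenvalues i)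
    else if α = ⊤ then -Real.log (⨆ i, h.eigenvalues i)
    else (1 - α.toReal)⁻¹ * Real.log (∑ i, h.eigenvalues i ^ α.toReal)
  else 0

/-- Matrix logarithm on the support: `log ρ = U diag(log λ_i) U†` via the spectral
decomposition, with `log 0 = 0` on the kernel; junk value `0` off Hermitian matrices. -/
noncomputable def matLog {d n : ℕ} [Fact (Nat.Prime d)] (ρ : Mat d n) : Mat d n :=
  if h : ρ.IsHermitian then
    (h.eigenvectorUnitary : Mat d n) *
      Matrix.diagonal (fun i => (Real.log (h.eigenvalues i) : ℂ)) *
      star (h.eigenvectorUnitary : Mat d n)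
  else 0

/-- Matrix real power on the support: `ρ^t = U diag(λ_i^t) U†`, with `0^t = 0` on the
kernel (for `t ≠ 0`); junk value `0` off Hermitian matrices. -/
noncomputable def matRpow {d n : ℕ} [Fact (Nat.Prime d)] (ρ : Mat d n) (t : ℝ) : Mat d n :=
  if h : ρ.IsHermitian then
    (h.eigenvectorUnitary : Mat d n) *
      Matrix.diagonal (fun i => ((h.eigenvalues i ^ t : ℝ) : ℂ)) *
      star (h.eigenvectorUnitary : Mat d n)
  else 0

/-- Support inclusion `supp ρ ⊆ supp σ`, expressed as `ker σ ⊆ ker ρ`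
(the correct notion for positive semidefinite matrices). -/
def suppLE {d n : ℕ} [Fact (Nat.Prime d)] (ρ σ : Mat d n) : Prop :=
  ∀ v : QV d n → ℂ, σ.mulVec v = 0 → ρ.mulVec v = 0

/-- Relative entropy `D(ρ‖σ) = Tr[ρ(log ρ - log σ)]` when `supp ρ ⊆ supp σ`, else `+∞`. -/
noncomputable def relEnt {d n : ℕ} [Fact (Nat.Prime d)] (ρ σ : Mat d n) : EReal :=
  if suppLE ρ σ then (((ρ * (matLog ρ - matLog σ)).trace.re : ℝ) : EReal) else ⊤

/-- Sandwiched Rényi relative entropy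
`D_α(ρ‖σ) = (α-1)⁻¹ log Tr[(σ^{(1-α)/(2α)} ρ σ^{(1-α)/(2α)})^α]` for `α ≠ 1`
(with `+∞` when `supp ρ ⊄ supp σ`), and `D_1 = D` the relative entropy. -/
noncomputable def sandRenyi {d n : ℕ} [Fact (Nat.Prime d)] (α : ℝ) (ρ σ : Mat d n) :
    EReal :=
  if α = 1 then relEnt ρ σ
  else if suppLE ρ σ then
    let x : ℝ := (α - 1)⁻¹ * Real.log
      ((matRpow (matRpow σ ((1 - α) / (2 * α)) * ρ * matRpow σ ((1 - α) / (2 * α)))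
        α).trace.re)
    (x : EReal)
  else ⊤

/-- The key unitary `U|i,j⟩ = |N g₁₁ i - N g₁₀ j, -N g₀₁ i + N g₀₀ j⟩`,
where `N = (det G)⁻¹` in `ℤ_d`. -/
noncomputable def convU (d n : ℕ) [Fact (Nat.Prime d)] (g00 g01 g10 g11 : ZMod d) :
    Matrix (QV d n × QV d n) (QV d n × QV d n) ℂ :=
  Matrix.of fun kl ij =>
    if kl = ((fun a => (g00 * g11 - g01 * g10)⁻¹ * g11 * ij.1 a
                      - (g00 * g11 - g01 * g10)⁻¹ * g10 * ij.2 a : QV d n),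
             (fun a => -((g00 * g11 - g01 * g10)⁻¹ * g01) * ij.1 a
                      + (g00 * g11 - g01 * g10)⁻¹ * g00 * ij.2 a : QV d n))
    then 1 else 0

/-- Tensor (Kronecker) product of two `n`-qudit operators, on the doubled system. -/
def kron {d n : ℕ} (ρ σ : Mat d n) : Matrix (QV d n × QV d n) (QV d n × QV d n) ℂ :=
  Matrix.of fun ij kl => ρ ij.1 kl.1 * σ ij.2 kl.2

/-- Partial trace over the second `n`-qudit factor. -/
noncomputable def ptrB {d n : ℕ} [Fact (Nat.Prime d)]
    (M : Matrix (QV d n × QV d n) (QV d n × QV d n) ℂ) : Mat d n :=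
  Matrix.of fun i i' => ∑ j : QV d n, M (i, j) (i', j)

/-- The convolution `ρ ⊠ σ = Tr_B[U (ρ ⊗ σ) U†]` with parameter matrix
`G = [g₀₀, g₀₁; g₁₀, g₁₁]`. -/
noncomputable def conv (d n : ℕ) [Fact (Nat.Prime d)] (g00 g01 g10 g11 : ZMod d)
    (ρ σ : Mat d n) : Mat d n :=
  ptrB (convU d n g00 g01 g10 g11 * kron ρ σ * (convU d n g00 g01 g10 g11)ᴴ)

/-- The beam-splitter unitary `U_{s,t}|i,j⟩ = |s i + t j, t i - s j⟩`. -/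
noncomputable def bsU (d n : ℕ) [Fact (Nat.Prime d)] (s t : ZMod d) :
    Matrix (QV d n × QV d n) (QV d n × QV d n) ℂ :=
  Matrix.of fun kl ij =>
    if kl = ((fun a => s * ij.1 a + t * ij.2 a : QV d n),
             (fun a => t * ij.1 a - s * ij.2 a : QV d n))
    then 1 else 0

/-- The beam-splitter convolution `ρ ⊠_{s,t} σ = Tr_B[U_{s,t} (ρ ⊗ σ) U_{s,t}†]`. -/
noncomputable def bsConv (d n : ℕ) [Fact (Nat.Prime d)] (s t : ZMod d)
    (ρ σ : Mat d n) : Mat d n :=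
  ptrB (bsU d n s t * kron ρ σ * (bsU d n s t)ᴴ)

/-- Iterated self-convolution: `⊠^0 ρ = ρ` and `⊠^{N+1} ρ = (⊠^N ρ) ⊠ ρ`. -/
noncomputable def bsIter (d n : ℕ) [Fact (Nat.Prime d)] (s t : ZMod d) :
    ℕ → Mat d n → Mat d n
  | 0, ρ => ρ
  | N + 1, ρ => bsConv d n s t (bsIter d n s t N ρ) ρ

/-- `ρ` is the pure stabilizer state `|ψ⟩⟨ψ|` with stabilizer label group `S ⊆ V^n`:
`S` has order `d^n` and `ψ` is a common eigenvector of all `w(p,q)`, `(p,q) ∈ S`. -/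
noncomputable def IsPureStabilizerWithGroup (d n : ℕ) [Fact (Nat.Prime d)]
    (ρ : Mat d n) (S : AddSubgroup (QV d n × QV d n)) : Prop :=
  Nat.card S = d ^ n ∧
    ∃ ψ : QV d n → ℂ, ψ ≠ 0 ∧
      ρ = Matrix.of (fun a b => ψ a * starRingEnd ℂ (ψ b)) ∧
      ∀ pq ∈ S, ∃ c : ℂ, (weyl d n pq.1 pq.2).mulVec ψ = c • ψ

/-- `ρ` is a pure stabilizer state. -/
noncomputable def IsPureStabilizer (d n : ℕ) [Fact (Nat.Prime d)] (ρ : Mat d n) : Prop :=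
  ∃ S : AddSubgroup (QV d n × QV d n), IsPureStabilizerWithGroup d n ρ S

/-- `ρ` is a stabilizer state: a convex combination of pure stabilizer states. -/
noncomputable def IsStabilizerState (d n : ℕ) [Fact (Nat.Prime d)] (ρ : Mat d n) : Prop :=
  ∃ (m : ℕ) (p : Fin m → ℝ) (τ : Fin m → Mat d n),
    (∀ i, 0 ≤ p i) ∧ ∑ i, p i = 1 ∧ (∀ i, IsPureStabilizer d n (τ i)) ∧
    ρ = ∑ i, (p i : ℂ) • τ i

/-- `U` is a Clifford unitary: a unitary mapping each Weyl operator, under conjugation,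
to a complex phase times a Weyl operator. -/
noncomputable def IsClifford (d n : ℕ) [Fact (Nat.Prime d)] (U : Mat d n) : Prop :=
  U ∈ Matrix.unitaryGroup (QV d n) ℂ ∧
    ∀ pq : QV d n × QV d n, ∃ (c : ℂ) (pq' : QV d n × QV d n),
      ‖c‖ = 1 ∧ U * weyl d n pq.1 pq.2 * Uᴴ = c • weyl d n pq'.1 pq'.2

/-- The divergence-based quantum Fisher information `J(ρ; H) = Tr[ρ [H,[H, log ρ]]]`. -/
noncomputable def fisherJ {d n : ℕ} [Fact (Nat.Prime d)] (ρ H : Mat d n) : ℝ :=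
  (ρ * (H * (H * matLog ρ - matLog ρ * H) - (H * matLog ρ - matLog ρ * H) * H)).trace.re

/-- Embed a single-qudit operator at site `k` of an `n`-qudit system
(tensored with the identity elsewhere). -/
noncomputable def embedAt (d n : ℕ) (k : Fin n) (M : Matrix (ZMod d) (ZMod d) ℂ) :
    Mat d n :=
  Matrix.of fun v w => if ∀ i, i ≠ k → v i = w i then M (v k) (w k) else 0

/-- The rank-one projection `H_j^Z = |j⟩⟨j|` onto the eigenvector of `Z`
with eigenvalue `ξ^j`. -/
noncomputable def projZ (d : ℕ) (j : ZMod d) : Matrix (ZMod d) (ZMod d) ℂ :=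
  Matrix.of fun a b => if a = j ∧ b = j then 1 else 0

/-- The rank-one projection `H_j^X` onto the eigenvector of `X` with eigenvalue `ξ^j`;
its entries are `(H_j^X)_{a b} = d⁻¹ ξ^{j(b-a)}`. -/
noncomputable def projX (d : ℕ) (j : ZMod d) : Matrix (ZMod d) (ZMod d) ℂ :=
  Matrix.of fun a b => (d : ℂ)⁻¹ * ch d (j * (b - a))

/-- Total Fisher information
`J(ρ) = ∑_{k=1}^n ∑_{j ∈ ℤ_d} J(ρ; H_j^{X_k}) + J(ρ; H_j^{Z_k})`. -/
noncomputable def fisherTotal (d n : ℕ) [Fact (Nat.Prime d)] (ρ : Mat d n) : ℝ :=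
  ∑ k : Fin n, ∑ j : ZMod d,
    (fisherJ ρ (embedAt d n k (projX d j)) + fisherJ ρ (embedAt d n k (projZ d j)))

/-- Holevo capacity of a channel `E`:
`χ(E) = sup H(∑ p_i E(ρ_i)) - ∑ p_i H(E(ρ_i))` over finite ensembles of states. -/
noncomputable def holevoCap (d n : ℕ) [Fact (Nat.Prime d)] (E : Mat d n → Mat d n) : ℝ :=
  ⨆ m : ℕ, ⨆ p : Fin m → ℝ, ⨆ ρs : Fin m → Mat d n,
    ⨆ _ : (∀ i, 0 ≤ p i) ∧ ∑ i, p i = 1 ∧ ∀ i, IsState d n (ρs i),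
      (vnEnt (∑ i, (p i : ℂ) • E (ρs i)) - ∑ i, p i * vnEnt (E (ρs i)))

/-- Hilbert–Schmidt norm `‖A‖₂ = (Tr[A†A])^{1/2}`. -/
noncomputable def hsNorm {d n : ℕ} [Fact (Nat.Prime d)] (A : Mat d n) : ℝ :=
  Real.sqrt ((Aᴴ * A).trace.re)

/-- Trace norm `‖A‖₁ = Tr[(A†A)^{1/2}]`. -/
noncomputable def trNorm {d n : ℕ} [Fact (Nat.Prime d)] (A : Mat d n) : ℝ :=
  (matRpow (Aᴴ * A) (2⁻¹ : ℝ)).trace.re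

/-- Tensor product of an `n₁`-qudit operator with an `n₂`-qudit operator,
as an `(n₁+n₂)`-qudit operator. -/
def tensorMat (d n₁ n₂ : ℕ) (ρ₁ : Mat d n₁) (ρ₂ : Mat d n₂) : Mat d (n₁ + n₂) :=
  Matrix.of fun v w =>
    ρ₁ (fun i => v (Fin.castAdd n₂ i)) (fun i => w (Fin.castAdd n₂ i)) *
    ρ₂ (fun j => v (Fin.natAdd n₁ j)) (fun j => w (Fin.natAdd n₁ j))

/-! ### Qubit (`d = 2`) specific definitions -/

/-- The `n`-qubit Weyl (Pauli) operator `w(p,q) = ⊗_i i^{-p_i q_i} Z^{p_i} X^{q_i}`. -/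
noncomputable def weyl2 (n : ℕ) (p q : Fin n → ZMod 2) :
    Matrix (Fin n → ZMod 2) (Fin n → ZMod 2) ℂ :=
  Matrix.of fun k' k =>
    if k' = k + q then
      ∏ i, ((-Complex.I) ^ ((p i).val * (q i).val) *
        (-1 : ℂ) ^ ((p i * (k i + q i)).val))
    else 0

/-- The `n`-qubit characteristic function `Ξ_ρ(p,q) = Tr[ρ w(p,q)†]`. -/
noncomputable def xi2 (n : ℕ) (ρ : Matrix (Fin n → ZMod 2) (Fin n → ZMod 2) ℂ)
    (pq : (Fin n → ZMod 2) × (Fin n → ZMod 2)) : ℂ :=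
  (ρ * (weyl2 n pq.1 pq.2)ᴴ).trace

/-- The logarithmic magic gap
`LMG(ρ) = -log₂ max{|Ξ_ρ(p,q)| : Ξ_ρ(p,q) ≠ 0, |Ξ_ρ(p,q)| ≠ 1}` (`0` if the set is
empty). -/
noncomputable def lmg (n : ℕ) (ρ : Matrix (Fin n → ZMod 2) (Fin n → ZMod 2) ℂ) : ℝ :=
  let s : Finset ℝ :=
    (Finset.univ.filter fun pq : (Fin n → ZMod 2) × (Fin n → ZMod 2) =>
      xi2 n ρ pq ≠ 0 ∧ ‖xi2 n ρ pq‖ ≠ 1).image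
      fun pq => ‖xi2 n ρ pq‖
  if h : s.Nonempty then -Real.logb 2 (s.max' h) else 0

/-- `U` is an `n`-qubit Clifford unitary. -/
noncomputable def IsClifford2 (n : ℕ) (U : Matrix (Fin n → ZMod 2) (Fin n → ZMod 2) ℂ) :
    Prop :=
  U ∈ Matrix.unitaryGroup (Fin n → ZMod 2) ℂ ∧
    ∀ pq : (Fin n → ZMod 2) × (Fin n → ZMod 2),
      ∃ (c : ℂ) (pq' : (Fin n → ZMod 2) × (Fin n → ZMod 2)),
        ‖c‖ = 1 ∧ U * weyl2 n pq.1 pq.2 * Uᴴ = c • weyl2 n pq'.1 pq'.2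

/-- The T gate `diag(1, e^{iπ/4})` acting on qubit `k` of an `n`-qubit system. -/
noncomputable def tGateAt (n : ℕ) (k : Fin n) :
    Matrix (Fin n → ZMod 2) (Fin n → ZMod 2) ℂ :=
  embedAt 2 n k (Matrix.of fun a b =>
    if a = b then (if a = 0 then 1 else Complex.exp (Real.pi * Complex.I / 4)) else 0)

/-- An `n`-qubit state: positive semidefinite with trace one. -/
def IsState2 (n : ℕ) (ρ : Matrix (Fin n → ZMod 2) (Fin n → ZMod 2) ℂ) : Prop :=
  ρ.PosSemidef ∧ ρ.trace = 1

end PaperQI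

namespace PaperQI

section helpers

variable {d n : ℕ} [Fact (Nat.Prime d)]

lemma ch_eq (z : ZMod d) : ch d z = ZMod.stdAddChar z := by
  rw [ZMod.stdAddChar_apply, ZMod.toCircle_apply, ch]

lemma ch_add (a b : ZMod d) : ch d (a + b) = ch d a * ch d b := by
  simp only [ch_eq, AddChar.map_add_eq_mul]

lemma ch_zero : ch d 0 = 1 := by
  simp only [ch_eq, AddChar.map_zero_eq_one]

lemma ch_norm (a : ZMod d) : ‖ch d a‖ = 1 := by
  rw [ch_eq, ZMod.stdAddChar_apply]; exact Circle.norm_coe _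

lemma ch_conj (a : ZMod d) : star (ch d a) = ch d (-a) := by
  rw [ch_eq, ch_eq, ZMod.stdAddChar_apply, ZMod.stdAddChar_apply, AddChar.map_neg_eq_inv,
    Circle.coe_inv_eq_conj]
  rfl

lemma ch_pow (a : ZMod d) : ch d a ^ d = 1 := by
  rw [ch_eq, ← AddChar.map_nsmul_eq_pow]; simp

lemma qdot_add_left (a b c : QV d n) : qdot (a + b) c = qdot a c + qdot b c := by
  simp [qdot, add_mul, Finset.sum_add_distrib]

lemma qdot_add_right (a b c : QV d n) : qdot a (b + c) = qdot a b + qdot a c := by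
  simp [qdot, mul_add, Finset.sum_add_distrib]

lemma qdot_neg_left (a c : QV d n) : qdot (-a) c = - qdot a c := by
  simp [qdot]

lemma qdot_neg_right (a c : QV d n) : qdot a (-c) = - qdot a c := by
  simp [qdot]

lemma qdot_nsmul_left (k : ℕ) (a c : QV d n) : qdot (k • a) c = k * qdot a c := by
  simp [qdot, Finset.mul_sum, mul_assoc]

lemma qdot_nsmul_right (k : ℕ) (a c : QV d n) : qdot a (k • c) = k * qdot a c := by
  simp [qdot, Finset.mul_sum, mul_left_comm]

lemma two_half (hd : Odd d) : (2 : ZMod d) * 2⁻¹ = 1 := by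
  apply mul_inv_cancel₀
  intro h
  have h2 : ((2 : ℕ) : ZMod d) = 0 := by exact_mod_cast h
  rw [ZMod.natCast_eq_zero_iff] at h2
  have := (Nat.prime_dvd_prime_iff_eq (Fact.out : Nat.Prime d) Nat.prime_two).1 h2
  subst this
  exact absurd hd (by decide)

lemma weyl_mul (hd : Odd d) (p q p' q' : QV d n) :
    weyl d n p q * weyl d n p' q' =
      ch d (2⁻¹ * (qdot p q' - qdot p' q)) • weyl d n (p + p') (q + q') := by
  have h2 := two_half hd
  ext k' k
  simp only [weyl, Matrix.mul_apply, Matrix.of_apply, Matrix.smul_apply, smul_eq_mul]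
  rw [Finset.sum_eq_single (k + q')]
  · by_cases h : k' = k + q' + q
    · have h' : k' = k + (q + q') := by rw [h]; abel
      rw [if_pos h, if_pos rfl, if_pos h', ← ch_add, ← ch_add]
      congr 1
      simp only [qdot_add_left, qdot_add_right]
      linear_combination (-qdot p q') * h2
    · have h' : ¬ k' = k + (q + q') := by
        intro h'; apply h; rw [h']; abel
      rw [if_neg h, if_neg h']; simp
  · intro b _ hb
    rw [if_neg hb, mul_zero]
  · simp

lemma weyl_zero : weyl d n 0 0 = 1 := by
  ext k' k
  simp [weyl, Matrix.one_apply, qdot, ch_zero]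

lemma weyl_mul_neg (hd : Odd d) (p q : QV d n) : weyl d n p q * weyl d n (-p) (-q) = 1 := by
  rw [weyl_mul hd]
  simp [qdot_neg_left, qdot_neg_right, ch_zero, weyl_zero]

lemma weyl_conj (hd : Odd d) (p q : QV d n) : (weyl d n p q)ᴴ = weyl d n (-p) (-q) := by
  have h2 := two_half hd
  ext k' k
  simp only [weyl, Matrix.conjTranspose_apply, Matrix.of_apply]
  by_cases h : k = k' + q
  · have h' : k' = k + -q := by rw [h]; abel
    rw [if_pos h, if_pos h', ch_conj, h]
    congr 1
    simp only [qdot_add_right, qdot_neg_left, qdot_neg_right]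
    linear_combination (-qdot p q) * h2
  · have h' : ¬ k' = k + -q := by
      intro h'; apply h; rw [h']; abel
    rw [if_neg h, if_neg h', star_zero]

lemma weyl_pow (hd : Odd d) (p q : QV d n) (k : ℕ) :
    weyl d n p q ^ k = weyl d n (k • p) (k • q) := by
  induction k with
  | zero => simp [weyl_zero]
  | succ k ih =>
    rw [pow_succ, ih, weyl_mul hd, qdot_nsmul_left, qdot_nsmul_right, sub_self, mul_zero,
      ch_zero, one_smul, succ_nsmul, succ_nsmul]

lemma weyl_pow_d (hd : Odd d) (p q : QV d n) : weyl d n p q ^ d = 1 := by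
  rw [weyl_pow hd, ← weyl_zero]
  congr 1 <;> (ext i; simp)

open scoped MatrixOrder in
lemma psd_factor {A : Mat d n} (hA : A.PosSemidef) : ∃ C : Mat d n, A = Cᴴ * C :=
  CStarAlgebra.nonneg_iff_eq_star_mul_self.mp hA.nonneg

/-- Equality case of `|Tr ρU| ≤ 1`. -/
lemma eq_case (ρ U : Mat d n) (hρ : IsState d n ρ) (hU : U * Uᴴ = 1)
    (h : ‖(ρ * U).trace‖ = 1) : ρ * U = (ρ * U).trace • ρ := by
  set c := (ρ * U).trace with hc
  have hcc : c * star c = 1 := by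
    have := Complex.mul_conj c
    rw [Complex.normSq_eq_norm_sq, h] at this
    simpa using this
  have hstar : (ρ * Uᴴ).trace = star c := by
    rw [hc, ← Matrix.trace_conjTranspose, Matrix.conjTranspose_mul, hρ.1.1.eq,
      Matrix.trace_mul_comm]
  have h0 : ((U - c • 1)ᴴ * ρ * (U - c • 1)).trace = 0 := by
    rw [Matrix.trace_mul_comm, ← Matrix.mul_assoc, Matrix.trace_mul_comm]
    have : ρ * ((U - c • 1) * (U - c • 1)ᴴ)
        = ρ * (U * Uᴴ) - star c • (ρ * U) - c • (ρ * Uᴴ) + (c * star c) • ρ := by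
      simp only [Matrix.conjTranspose_sub, Matrix.conjTranspose_smul,
        Matrix.conjTranspose_one, Matrix.mul_sub, Matrix.sub_mul, Matrix.mul_smul,
        Matrix.smul_mul, Matrix.mul_one, Matrix.one_mul, mul_smul]
      rw [smul_sub, smul_comm (star c) c]
      abel
    rw [this, hU, hcc, Matrix.mul_one]
    simp only [Matrix.trace_add, Matrix.trace_sub, Matrix.trace_smul, hstar, hρ.2, ← hc,
      smul_eq_mul]
    linear_combination (-2) * hcc
  have h1 := (hρ.1.conjTranspose_mul_mul_same (U - c • 1)).trace_eq_zero_iff.1 h0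
  obtain ⟨C, hC⟩ := psd_factor hρ.1
  have h2 : (C * (U - c • 1))ᴴ * (C * (U - c • 1)) = 0 := by
    rw [← h1, hC, Matrix.conjTranspose_mul]
    simp only [Matrix.mul_assoc]
  have h3 := Matrix.conjTranspose_mul_self_eq_zero.1 h2
  have h4 : ρ * (U - c • 1) = 0 := by
    rw [hC, Matrix.mul_assoc, h3, Matrix.mul_zero]
  rw [Matrix.mul_sub, Matrix.mul_smul, Matrix.mul_one] at h4
  exact sub_eq_zero.1 h4

/-- The phased Weyl operators. -/
noncomputable def uop (ρ : Mat d n) (a : QV d n × QV d n) : Mat d n :=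
  xi d n ρ a • weyl d n a.1 a.2

lemma rho_uop (hd : Odd d) {ρ : Mat d n} (hρ : IsState d n ρ) {a : QV d n × QV d n}
    (ha : ‖xi d n ρ a‖ = 1) : ρ * uop ρ a = ρ := by
  have hU : weyl d n (-a.1) (-a.2) * (weyl d n (-a.1) (-a.2))ᴴ = 1 := by
    rw [weyl_conj hd]; exact weyl_mul_neg hd _ _
  have h := eq_case ρ _ hρ hU ha
  change _ = xi d n ρ a • ρ at h
  rw [uop, Matrix.mul_smul, ← Matrix.smul_mul, ← h, Matrix.mul_assoc]
  have := weyl_mul_neg hd (-a.1) (-a.2)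
  rw [neg_neg, neg_neg] at this
  rw [this, Matrix.mul_one]

lemma xi_of_fix (hd : Odd d) {ρ : Mat d n} (hρ : IsState d n ρ) {a : QV d n × QV d n} {c : ℂ}
    (h : ρ * (c • weyl d n a.1 a.2) = ρ) : xi d n ρ a = c := by
  rw [xi]
  nth_rewrite 1 [← h]
  rw [Matrix.mul_assoc, Matrix.smul_mul, weyl_mul_neg hd]
  simp [hρ.2]

lemma uop_zero {ρ : Mat d n} (hρ : IsState d n ρ) : uop ρ 0 = 1 := by
  simp [uop, xi, weyl_zero, hρ.2]

lemma uop_mul (hd : Odd d) {ρ : Mat d n} (hρ : IsState d n ρ) {a b : QV d n × QV d n}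
    (ha : ‖xi d n ρ a‖ = 1) (hb : ‖xi d n ρ b‖ = 1) :
    ‖xi d n ρ (a + b)‖ = 1 ∧ uop ρ a * uop ρ b = uop ρ (a + b) := by
  have h1 : ρ * (uop ρ a * uop ρ b) = ρ := by
    rw [← Matrix.mul_assoc, rho_uop hd hρ ha, rho_uop hd hρ hb]
  have h2 : uop ρ a * uop ρ b = (xi d n ρ a * xi d n ρ b *
      ch d (2⁻¹ * (qdot a.1 b.2 - qdot b.1 a.2))) • weyl d n (a + b).1 (a + b).2 := by
    rw [uop, uop, Matrix.smul_mul, Matrix.mul_smul, weyl_mul hd, smul_smul, smul_smul]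
    rfl
  rw [h2] at h1
  have h3 := xi_of_fix hd hρ h1
  refine ⟨?_, ?_⟩
  · rw [h3, norm_mul, norm_mul, ha, hb, ch_norm]; norm_num
  · rw [h2, uop, h3]

lemma xi_neg (hd : Odd d) {ρ : Mat d n} (hρ : IsState d n ρ) (a : QV d n × QV d n) :
    xi d n ρ (-a) = star (xi d n ρ a) := by
  rw [xi, xi, ← Matrix.trace_conjTranspose, Matrix.conjTranspose_mul, hρ.1.1.eq,
    weyl_conj hd, Matrix.trace_mul_comm]
  rfl

lemma uop_conj (hd : Odd d) {ρ : Mat d n} (hρ : IsState d n ρ) (a : QV d n × QV d n) :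
    (uop ρ a)ᴴ = uop ρ (-a) := by
  rw [uop, uop, xi_neg hd hρ, Matrix.conjTranspose_smul, weyl_conj hd]
  rfl

/-- The stabilizer label group of `ρ`. -/
noncomputable def sgrp (hd : Odd d) {ρ : Mat d n} (hρ : IsState d n ρ) :
    AddSubgroup (QV d n × QV d n) where
  carrier := {a | ‖xi d n ρ a‖ = 1}
  zero_mem' := by simp [xi, weyl_zero, hρ.2]
  add_mem' ha hb := (uop_mul hd hρ ha hb).1
  neg_mem' {a} ha := by
    change ‖xi d n ρ (-a)‖ = 1
    rw [xi_neg hd hρ, norm_star]; exact ha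

/-- Subgroup averages. -/
noncomputable def mT (ρ : Mat d n) (T : AddSubgroup (QV d n × QV d n)) : Mat d n :=
  ((d : ℂ) ^ n)⁻¹ • ∑ a : T, uop ρ a

lemma mean_eq (hd : Odd d) {ρ : Mat d n} (hρ : IsState d n ρ) :
    meanState d n ρ = mT ρ (sgrp hd hρ) := by
  rw [meanState, mT, ← Finset.sum_filter]
  congr 1
  rw [Finset.sum_subtype (p := fun a => a ∈ sgrp hd hρ)]
  · rfl
  · intro x
    rw [Finset.mem_filter]
    exact ⟨fun h => h.2, fun h => ⟨Finset.mem_univ _, h⟩⟩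

lemma mT_herm (hd : Odd d) {ρ : Mat d n} (hρ : IsState d n ρ)
    (T : AddSubgroup (QV d n × QV d n)) : (mT ρ T).IsHermitian := by
  rw [Matrix.IsHermitian, mT, Matrix.conjTranspose_smul, Matrix.conjTranspose_sum]
  congr 1
  · simp
  · apply Fintype.sum_equiv (Equiv.neg T)
    intro a
    rw [uop_conj hd hρ]; rfl

lemma rho_mT (hd : Odd d) {ρ : Mat d n} (hρ : IsState d n ρ)
    {T : AddSubgroup (QV d n × QV d n)} (hT : T ≤ sgrp hd hρ) :
    ρ * mT ρ T = (((Nat.card T : ℝ) / (d : ℝ) ^ n : ℝ) : ℂ) • ρ := by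
  rw [mT, Matrix.mul_smul, Matrix.mul_sum, Finset.sum_congr rfl
    (fun a _ => rho_uop hd hρ (hT a.2))]
  rw [Finset.sum_const, Finset.card_univ, ← Nat.card_eq_fintype_card,
    ← Nat.cast_smul_eq_nsmul ℂ, smul_smul]
  congr 1
  push_cast
  ring

/-- Functional calculus shape. -/
lemma mul_fun (ρ σ : Mat d n) (h : σ.IsHermitian) (c : ℝ) (hs : ρ * σ = (c : ℂ) • ρ)
    (f : ℝ → ℝ) :
    ρ * ((h.eigenvectorUnitary : Mat d n) *
      Matrix.diagonal (fun i => ((f (h.eigenvalues i) : ℝ) : ℂ)) *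
      star (h.eigenvectorUnitary : Mat d n)) = ((f c : ℝ) : ℂ) • ρ := by
  set U := (h.eigenvectorUnitary : Mat d n) with hU
  have hUU : star U * U = 1 := Unitary.coe_star_mul_self h.eigenvectorUnitary
  have hUU' : U * star U = 1 := Unitary.coe_mul_star_self h.eigenvectorUnitary
  have hsp : σ = U * Matrix.diagonal (fun i => ((h.eigenvalues i : ℝ) : ℂ)) * star U := by
    have := h.spectral_theorem
    rw [Unitary.conjStarAlgAut_apply] at this
    exact this
  have h1 : (ρ * U) * Matrix.diagonal (fun i => ((h.eigenvalues i : ℝ) : ℂ))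
      = (c : ℂ) • (ρ * U) := by
    have : ρ * σ * U = (c : ℂ) • (ρ * U) := by rw [hs, Matrix.smul_mul]
    rw [← this]
    nth_rewrite 2 [hsp]
    simp only [Matrix.mul_assoc, hUU, Matrix.mul_one]
  have h2 : (ρ * U) * Matrix.diagonal (fun i => ((f (h.eigenvalues i) : ℝ) : ℂ))
      = ((f c : ℝ) : ℂ) • (ρ * U) := by
    ext i j
    have h3 := congrFun (congrFun h1 i) j
    rw [Matrix.mul_diagonal, Matrix.smul_apply, smul_eq_mul] at h3 ⊢
    by_cases hz : (ρ * U) i j = 0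
    · rw [hz]; simp
    · have : ((h.eigenvalues j : ℝ) : ℂ) = c := by
        apply mul_left_cancel₀ hz; rw [h3, mul_comm]
      rw [Complex.ofReal_inj.1 this, mul_comm]
  rw [← Matrix.mul_assoc, ← Matrix.mul_assoc, h2, Matrix.smul_mul, Matrix.mul_assoc, hUU',
    Matrix.mul_one]

lemma matRpow_cfc {σ : Mat d n} (h : σ.IsHermitian) (t : ℝ) :
    matRpow σ t = cfc (fun x : ℝ => x ^ t) σ := by
  rw [h.cfc_eq, matRpow, dif_pos h, Matrix.IsHermitian.cfc, Unitary.conjStarAlgAut_apply]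
  rfl

lemma matRpow_herm {σ : Mat d n} (h : σ.IsHermitian) (t : ℝ) : (matRpow σ t).IsHermitian := by
  rw [matRpow_cfc h]
  exact cfc_predicate (R := ℝ) _ σ

lemma sandwich {ρ σ : Mat d n} (hρ : ρ.IsHermitian) (h : σ.IsHermitian) {c : ℝ}
    (hc : 0 < c) (hs : ρ * σ = (c : ℂ) • ρ) (t : ℝ) :
    matRpow σ t * ρ * matRpow σ t = (((c ^ (2 * t) : ℝ)) : ℂ) • ρ := by
  have h1 : ρ * matRpow σ t = ((c ^ t : ℝ) : ℂ) • ρ := by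
    have := mul_fun ρ σ h c hs (fun x => x ^ t)
    rw [matRpow, dif_pos h]; exact this
  have h2 : matRpow σ t * ρ = ((c ^ t : ℝ) : ℂ) • ρ := by
    have := congrArg Matrix.conjTranspose h1
    rw [Matrix.conjTranspose_mul, (matRpow_herm h t).eq, hρ.eq, Matrix.conjTranspose_smul,
      hρ.eq] at this
    rw [this]; simp
  rw [h2, Matrix.smul_mul, h1, smul_smul, ← Complex.ofReal_mul, ← Real.rpow_add hc, two_mul]

lemma matRpow_smul {ρ : Mat d n} (hρ : ρ.PosSemidef) {s : ℝ} (hs : 0 < s) (t : ℝ) :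
    matRpow ((s : ℂ) • ρ) t = ((s ^ t : ℝ) : ℂ) • matRpow ρ t := by
  have e : ((s : ℂ) • ρ) = s • ρ := by ext; simp
  have hh : (s • ρ).IsHermitian := by
    rw [Matrix.IsHermitian, Matrix.conjTranspose_smul, hρ.1.eq]; simp
  have e2 : ((s ^ t : ℝ) : ℂ) • matRpow ρ t = (s ^ t : ℝ) • matRpow ρ t := by ext; simp
  have hsa : IsSelfAdjoint ρ := hρ.1
  rw [e, e2, matRpow_cfc hh, matRpow_cfc hρ.1, ← cfc_comp_smul s (fun x : ℝ => x ^ t) ρ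
    (Set.Finite.continuousOn ((Matrix.finite_real_spectrum).image _) _),
    ← cfc_smul (s ^ t : ℝ) (fun x : ℝ => x ^ t) ρ
    (Set.Finite.continuousOn (Matrix.finite_real_spectrum) _)]
  apply cfc_congr
  intro x hx
  rw [hρ.1.spectrum_real_eq_range_eigenvalues] at hx
  obtain ⟨i, rfl⟩ := hx
  simp only [smul_eq_mul]
  exact Real.mul_rpow hs.le (hρ.eigenvalues_nonneg i)

lemma trace_rpow_pos {ρ : Mat d n} (hρ : IsState d n ρ) (t : ℝ) :
    0 < (matRpow ρ t).trace.re := by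
  have h := hρ.1.1
  have e : (matRpow ρ t).trace = ((∑ i, h.eigenvalues i ^ t : ℝ) : ℂ) := by
    rw [matRpow, dif_pos h, Matrix.mul_assoc, Matrix.trace_mul_comm, Matrix.mul_assoc,
      Unitary.coe_star_mul_self, Matrix.mul_one, Matrix.trace_diagonal]
    push_cast; rfl
  rw [e, Complex.ofReal_re]
  have htr : ∑ i, h.eigenvalues i = 1 := by
    have := h.trace_eq_sum_eigenvalues
    rw [hρ.2] at this
    apply Complex.ofReal_injective
    rw [Complex.ofReal_sum, Complex.ofReal_one]
    exact this.symm
  have hnn := hρ.1.eigenvalues_nonneg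
  have hex : ∃ i, 0 < h.eigenvalues i := by
    by_contra hcon
    push Not at hcon
    have : ∑ i, h.eigenvalues i ≤ 0 := Finset.sum_nonpos (fun i _ => hcon i)
    linarith
  obtain ⟨i, hi⟩ := hex
  exact Finset.sum_pos' (fun j _ => Real.rpow_nonneg (hnn j) t)
    ⟨i, Finset.mem_univ _, Real.rpow_pos_of_pos hi t⟩

/-- Value of the divergence. -/
lemma sand_val {ρ : Mat d n} (hρ : IsState d n ρ) (α : ℝ) (hα : 1 ≤ α) :
    ∃ K : ℝ, ∀ (σ : Mat d n) (c : ℝ), σ.IsHermitian → 0 < c → ρ * σ = (c : ℂ) • ρ →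
      sandRenyi α ρ σ = ((K - Real.log c : ℝ) : EReal) := by
  have hsupp : ∀ (σ : Mat d n) (c : ℝ), 0 < c → ρ * σ = (c : ℂ) • ρ → suppLE ρ σ := by
    intro σ c hc hs v hv
    have : (ρ * σ).mulVec v = 0 := by rw [← Matrix.mulVec_mulVec, hv, Matrix.mulVec_zero]
    rw [hs, Matrix.smul_mulVec] at this
    exact (smul_eq_zero.1 this).resolve_left (by exact_mod_cast hc.ne')
  by_cases h1 : α = 1
  · refine ⟨(ρ * matLog ρ).trace.re, fun σ c h hc hs => ?_⟩
    rw [sandRenyi, if_pos h1, relEnt, if_pos (hsupp σ c hc hs)]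
    have := mul_fun ρ σ h c hs Real.log
    have e : ρ * matLog σ = ((Real.log c : ℝ) : ℂ) • ρ := by
      rw [matLog, dif_pos h]; exact this
    rw [Matrix.mul_sub, e, Matrix.trace_sub, Matrix.trace_smul, hρ.2, Complex.sub_re]
    simp only [smul_eq_mul, mul_one, Complex.ofReal_re]
  · have hα' : 1 < α := lt_of_le_of_ne hα (Ne.symm h1)
    refine ⟨(α - 1)⁻¹ * Real.log (matRpow ρ α).trace.re, fun σ c h hc hs => ?_⟩
    rw [sandRenyi, if_neg h1, if_pos (hsupp σ c hc hs)]
    simp only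
    rw [sandwich hρ.1.1 h hc hs, matRpow_smul hρ.1 (Real.rpow_pos_of_pos hc _),
      Matrix.trace_smul, smul_eq_mul, Complex.re_ofReal_mul, Real.log_mul
      (Real.rpow_pos_of_pos (Real.rpow_pos_of_pos hc _) _).ne' (trace_rpow_pos hρ α).ne',
      Real.log_rpow (Real.rpow_pos_of_pos hc _), Real.log_rpow hc]
    congr 1
    have : α - 1 ≠ 0 := by linarith
    have : α ≠ 0 := by linarith
    field_simp
    ring

/-- The projection average of a `d`-periodic operator. -/
lemma avg_mul {v : Mat d n} (hv : v ^ d = 1) :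
    ((d : ℂ)⁻¹ • ∑ k : ZMod d, v ^ k.val) * v = (d : ℂ)⁻¹ • ∑ k : ZMod d, v ^ k.val := by
  rw [Matrix.smul_mul, Matrix.sum_mul]
  congr 1
  apply Fintype.sum_equiv (Equiv.addRight (1 : ZMod d))
  intro k
  rw [← pow_succ, Equiv.coe_addRight]
  have hdp : 1 < d := (Fact.out : Nat.Prime d).one_lt
  have : (k + 1).val = (k.val + 1) % d := by
    rw [ZMod.val_add, ZMod.val_one'' hdp.ne']
  rw [this]
  exact pow_eq_pow_mod _ hv

lemma mul_avg {A v : Mat d n} (hv : A * v = A) :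
    A * ((d : ℂ)⁻¹ • ∑ k : ZMod d, v ^ k.val) = A := by
  have hk : ∀ k : ℕ, A * v ^ k = A := by
    intro k
    induction k with
    | zero => simp
    | succ k ih => rw [pow_succ, ← Matrix.mul_assoc, ih, hv]
  have hd0 : (d : ℂ) ≠ 0 := by exact_mod_cast (Fact.out : Nat.Prime d).ne_zero
  rw [Matrix.mul_smul, Matrix.mul_sum, Finset.sum_congr rfl (fun k _ => hk _),
    Finset.sum_const, Finset.card_univ, ZMod.card, ← Nat.cast_smul_eq_nsmul ℂ, smul_smul,
    inv_mul_cancel₀ hd0, one_smul]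

lemma mul_list_prod {A : Mat d n} (l : List (Mat d n)) (h : ∀ B ∈ l, A * B = A) :
    A * l.prod = A := by
  induction l with
  | nil => simp
  | cons B l ih =>
    rw [List.prod_cons, ← Matrix.mul_assoc, h B (by simp), ih]
    intro C hC; exact h C (by simp [hC])

lemma list_prod_mul {v B : Mat d n} (l : List (Mat d n)) (h : ∀ C ∈ l, Commute C v)
    (hB : B ∈ l) (hv : B * v = B) : l.prod * v = l.prod := by
  induction l with
  | nil => simp at hB
  | cons C l ih =>
    rw [List.prod_cons, Matrix.mul_assoc]
    rcases List.mem_cons.1 hB with rfl | hB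
    · have hc : Commute l.prod v :=
        Commute.list_prod_left _ _ (fun D hD => h D (by simp [hD]))
      rw [hc.eq, ← Matrix.mul_assoc, hv]
    · rw [ih (fun D hD => h D (by simp [hD])) hB]

lemma msps_eq (hd : Odd d) {ρ : Mat d n} (hρ : IsState d n ρ) {σ : Mat d n}
    (hσ : IsMSPS d n σ) (hs : suppLE ρ σ) :
    ∃ T : AddSubgroup (QV d n × QV d n), T ≤ sgrp hd hρ ∧ σ = mT ρ T := by
  obtain ⟨r, hr, p, q, x, hcomm, hcard, rfl⟩ := hσ
  have hd0 : (d : ℂ) ≠ 0 := by exact_mod_cast (Fact.out : Nat.Prime d).ne_zero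
  set v : Fin r → Mat d n := fun i => ch d (x i) • weyl d n (p i) (q i) with hvdef
  set l : List (Mat d n) := List.ofFn fun i => (d : ℂ)⁻¹ • ∑ k : ZMod d, v i ^ k.val with hl
  change suppLE ρ (((d : ℂ) ^ (n - r))⁻¹ • l.prod) at hs
  change ∃ T, _ ∧ ((d : ℂ) ^ (n - r))⁻¹ • l.prod = _
  set T := AddSubgroup.closure (Set.range fun i => (p i, q i)) with hT
  have hvd : ∀ i, v i ^ d = 1 := by
    intro i
    simp only [hvdef]
    rw [smul_pow, ch_pow, weyl_pow_d hd, one_smul]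
  have hvc : ∀ i j, Commute (v i) (v j) := fun i j =>
    ((hcomm i j).smul_left _).smul_right _
  have hQv : ∀ i, l.prod * v i = l.prod := by
    intro i
    refine list_prod_mul (B := (d : ℂ)⁻¹ • ∑ k : ZMod d, v i ^ k.val) l ?_ ?_ (avg_mul (hvd i))
    · intro C hC
      rw [hl, List.mem_ofFn] at hC
      obtain ⟨j, rfl⟩ := hC
      exact (Commute.sum_left _ _ _ (fun k _ => (hvc j i).pow_left _)).smul_left _
    · rw [hl, List.mem_ofFn]; exact ⟨i, rfl⟩
  have hAQ : ∀ A : Mat d n, (∀ i, A * v i = A) → A * l.prod = A := by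
    intro A hA
    apply mul_list_prod
    intro B hB
    rw [hl, List.mem_ofFn] at hB
    obtain ⟨j, rfl⟩ := hB
    exact mul_avg (hA j)
  have hQQ : l.prod * l.prod = l.prod := hAQ _ hQv
  have hρQ : ρ * l.prod = ρ := by
    have h0 : ρ * (1 - l.prod) = 0 := by
      apply Matrix.ext_of_mulVec_single
      intro j
      rw [← Matrix.mulVec_mulVec, Matrix.zero_mulVec]
      apply hs
      rw [Matrix.mulVec_mulVec, Matrix.smul_mul, Matrix.mul_sub, hQQ, Matrix.mul_one,
        sub_self, smul_zero, Matrix.zero_mulVec]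
    rw [Matrix.mul_sub, Matrix.mul_one] at h0
    exact (sub_eq_zero.1 h0).symm
  have hρv : ∀ i, ρ * v i = ρ := by
    intro i
    nth_rewrite 1 [← hρQ]
    rw [Matrix.mul_assoc, hQv, hρQ]
  have hxi : ∀ i, xi d n ρ (p i, q i) = ch d (x i) := fun i => xi_of_fix hd hρ (hρv i)
  have huv : ∀ i, uop ρ (p i, q i) = v i := by
    intro i; rw [uop, hxi]
  have hTS : T ≤ sgrp hd hρ := by
    rw [hT, AddSubgroup.closure_le]
    rintro _ ⟨i, rfl⟩
    change ‖xi d n ρ (p i, q i)‖ = 1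
    rw [hxi, ch_norm]
  refine ⟨T, hTS, ?_⟩
  have hQu : ∀ a ∈ T, l.prod * uop ρ a = l.prod := by
    intro a ha
    induction ha using AddSubgroup.closure_induction with
    | mem a ha =>
      obtain ⟨i, rfl⟩ := ha
      simp only
      rw [huv, hQv]
    | zero => rw [uop_zero hρ, Matrix.mul_one]
    | add a b ha hb iha ihb =>
      rw [← (uop_mul hd hρ (hTS ha) (hTS hb)).2, ← Matrix.mul_assoc, iha, ihb]
    | neg a ha iha =>
      have := (uop_mul hd hρ (hTS ha) (hTS (neg_mem ha))).2
      rw [add_neg_cancel, uop_zero hρ] at this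
      nth_rewrite 1 [← iha]
      rw [Matrix.mul_assoc, this, Matrix.mul_one]
  set Sg : Mat d n := ∑ a : T, uop ρ a with hSg
  have hSu : ∀ b ∈ T, uop ρ b * Sg = Sg := by
    intro b hb
    rw [hSg, Matrix.mul_sum]
    apply Fintype.sum_equiv (Equiv.addLeft (⟨b, hb⟩ : T))
    intro a
    rw [(uop_mul hd hρ (hTS hb) (hTS a.2)).2]; rfl
  have hSv : ∀ b ∈ T, Sg * uop ρ b = Sg := by
    intro b hb
    rw [hSg, Matrix.sum_mul]
    apply Fintype.sum_equiv (Equiv.addRight (⟨b, hb⟩ : T))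
    intro a
    rw [(uop_mul hd hρ (hTS a.2) (hTS hb)).2]; rfl
  have hSQ : Sg * l.prod = Sg := by
    apply hAQ
    intro i
    rw [← huv]
    exact hSv _ (AddSubgroup.subset_closure ⟨i, rfl⟩)
  have hQS : l.prod * Sg = (d : ℂ) ^ r • l.prod := by
    rw [hSg, Matrix.mul_sum, Finset.sum_congr rfl (fun a _ => hQu a.1 a.2),
      Finset.sum_const, Finset.card_univ, ← Nat.card_eq_fintype_card, hcard,
      ← Nat.cast_smul_eq_nsmul ℂ]
    push_cast; rfl
  have hvQ : ∀ i, v i * l.prod = l.prod := by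
    intro i
    have : Commute l.prod (v i) := by
      apply Commute.list_prod_left
      intro C hC
      rw [hl, List.mem_ofFn] at hC
      obtain ⟨j, rfl⟩ := hC
      exact (Commute.sum_left _ _ _ (fun k _ => (hvc j i).pow_left _)).smul_left _
    rw [← this.eq, hQv]
  have huQ : ∀ a ∈ T, uop ρ a * l.prod = l.prod := by
    intro a ha
    induction ha using AddSubgroup.closure_induction with
    | mem a ha =>
      obtain ⟨i, rfl⟩ := ha
      simp only
      rw [huv, hvQ]
    | zero => rw [uop_zero hρ, Matrix.one_mul]
    | add a b ha hb iha ihb =>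
      rw [← (uop_mul hd hρ (hTS ha) (hTS hb)).2, Matrix.mul_assoc, ihb, iha]
    | neg a ha iha =>
      have := (uop_mul hd hρ (hTS (neg_mem ha)) (hTS ha)).2
      rw [neg_add_cancel, uop_zero hρ] at this
      nth_rewrite 1 [← iha]
      rw [← Matrix.mul_assoc, this, Matrix.one_mul]
  have hSQ' : Sg * l.prod = (d : ℂ) ^ r • l.prod := by
    rw [hSg, Matrix.sum_mul, Finset.sum_congr rfl (fun a _ => huQ a.1 a.2),
      Finset.sum_const, Finset.card_univ, ← Nat.card_eq_fintype_card, hcard,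
      ← Nat.cast_smul_eq_nsmul ℂ]
    push_cast; rfl
  rw [mT, ← hSg, ← hSQ, hSQ', smul_smul]
  congr 1
  have : (d : ℂ) ^ n = d ^ (n - r) * d ^ r := by rw [← pow_add, Nat.sub_add_cancel hr]
  rw [this]
  field_simp

end helpers


/-- For every `n`-qudit state `ρ`, every `α ∈ [1,∞)` (with `D_1 = D`
the relative entropy) and every MSPS `σ ≠ M(ρ)`: `D_α(ρ‖σ) > D_α(ρ‖M(ρ))`; the mean
state is the unique minimizer among MSPS. -/
theorem statement3 (d n : ℕ) [Fact (Nat.Prime d)] (hd : Odd d) (hn : 1 ≤ n)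
    (ρ : Mat d n) (hρ : IsState d n ρ) (α : ℝ) (hα : 1 ≤ α)
    (σ : Mat d n) (hσ : IsMSPS d n σ) (hne : σ ≠ meanState d n ρ) :
    sandRenyi α ρ (meanState d n ρ) < sandRenyi α ρ σ := by
  obtain ⟨K, hK⟩ := sand_val hρ α hα
  have hd0 : (0 : ℝ) < (d : ℝ) ^ n := by
    have : 0 < d := (Fact.out : Nat.Prime d).pos
    positivity
  have hpos : ∀ T : AddSubgroup (QV d n × QV d n), (0 : ℝ) < (Nat.card T : ℝ) / (d : ℝ) ^ n := by
    intro T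
    have : (0 : ℝ) < (Nat.card T : ℝ) := by exact_mod_cast Nat.card_pos
    positivity
  rw [mean_eq hd hρ] at hne ⊢
  rw [hK _ _ (mT_herm hd hρ _) (hpos _) (rho_mT hd hρ le_rfl)]
  by_cases hs : suppLE ρ σ
  · obtain ⟨T, hT, rfl⟩ := msps_eq hd hρ hσ hs
    rw [hK _ _ (mT_herm hd hρ _) (hpos _) (rho_mT hd hρ hT)]
    have hlt : Nat.card T < Nat.card (sgrp hd hρ) := by
      refine lt_of_le_of_ne (AddSubgroup.card_le_of_le hT) (fun he => hne ?_)
      rw [AddSubgroup.eq_of_le_of_card_ge hT he.ge]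
    have hlog := Real.log_lt_log (hpos T)
      (div_lt_div_of_pos_right (Nat.cast_lt.2 hlt : (Nat.card T : ℝ) < (Nat.card (sgrp hd hρ) : ℝ)) hd0)
    rw [EReal.coe_lt_coe_iff]
    linarith
  · have : sandRenyi α ρ σ = ⊤ := by
      rw [sandRenyi]
      split_ifs
      rw [relEnt, if_neg hs]
      rfl
    rw [this]
    exact EReal.coe_lt_top _

end PaperQI
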